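/- arXiv:2508.01588 — 3 statements merged into one kernel-verified Lean document; each statement's English description precedes it below -/
import Mathlib

section
/- The splitting field of the polynomial X⁶ − 3X² − 1 over ℚ has degree 12 over ℚ. -/
/-!
Put `q = Y³ - 3Y - 1`, so that the sextic is `p = q(X²)`. If `y` is a root of `q`, then the other two
roots are `2 - y²` and `y² - y - 2`, and the three roots have product `1`. One root `y = t²` of `q`
is positive, with `t` real, and `2 - y² = z²` is negative, with `z` purely imaginary; the six roots
of `p` are `±t`, `±z` and `±(tz)⁻¹`, so the splitting field inside `ℂ` is `ℚ(t, z)`.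

The degree comes from one observation: adjoining to a real field a nonreal number whose square lies
in that field doubles the degree (`finrank_adjoin_sqrt`).
* `q` is irreducible, having no rational root, so `ℚ(z²)` is real of degree `3` and `ℚ(z)` has
  degree `6`. Hence `p` is irreducible.
* Therefore the real field `ℚ(t)` has degree `6` as well, and `ℚ(t, z)` has degree `12`.
-/

open Polynomial IntermediateField

/-- The field of real numbers, as an intermediate field of `ℂ / ℚ`. -/
noncomputable def realSubfield : IntermediateField ℚ ℂ :=
  (Complex.ofRealAm.restrictScalars ℚ).fieldRange

lemma mem_realSubfield_iff (x : ℂ) : x ∈ realSubfield ↔ ∃ r : ℝ, (r : ℂ) = x := Iff.rfl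

lemma finrank_adjoin_sqrt {K E : Type*} [Field K] [Field E] [Algebra K E]
    (F : IntermediateField K E) (z : E) (hz : z ∉ F) (hz2 : z ^ 2 ∈ F) :
    Module.finrank K (F⟮z⟯.restrictScalars K) = Module.finrank K F * 2 := by
  have hmonic : (X ^ 2 - C (⟨z ^ 2, hz2⟩ : F)).Monic := monic_X_pow_sub_C _ (by norm_num)
  have hroot : aeval z (X ^ 2 - C (⟨z ^ 2, hz2⟩ : F)) = 0 := by
    simp [IntermediateField.algebraMap_apply]
  have hint : IsIntegral F z := ⟨_, hmonic, hroot⟩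
  have hle : (minpoly F z).natDegree ≤ 2 :=
    (natDegree_le_of_dvd (minpoly.dvd F z hroot) hmonic.ne_zero).trans
      (natDegree_X_pow_sub_C).le
  have hpos := minpoly.natDegree_pos hint
  have hne : (minpoly F z).natDegree ≠ 1 := by
    rw [Ne, minpoly.natDegree_eq_one_iff]
    rintro ⟨x, hx⟩
    exact hz (hx ▸ x.2)
  have h2 : Module.finrank F F⟮z⟯ = 2 := by
    rw [adjoin.finrank hint]; omega
  have := Module.finrank_mul_finrank K F F⟮z⟯
  rw [h2] at this
  exact this.symm

lemma finrank_splittingField {K E : Type*} [Field K] [Field E] [Algebra K E] {p : K[X]}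
    {F : IntermediateField K E} (h : IsSplittingField K F p) :
    Module.finrank K p.SplittingField = Module.finrank K F :=
  (IsSplittingField.algEquiv F p).toLinearEquiv.finrank_eq.symm

lemma cubic_irreducible : Irreducible (X ^ 3 - 3 * X - 1 : ℚ[X]) := by
  have hdeg : (X ^ 3 - 3 * X - 1 : ℚ[X]).natDegree = 3 := by compute_degree!
  rw [irreducible_iff_roots_eq_zero_of_degree_le_three (by omega) (by omega)]
  refine Multiset.eq_zero_of_forall_notMem fun r hr => ?_
  have hr0 : r ^ 3 - 3 * r - 1 = 0 := by simpa using (mem_roots'.1 hr).2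
  have hZ : (X ^ 3 - 3 * X - 1 : ℤ[X]).Monic := by monicity!
  obtain ⟨n, hn⟩ := isInteger_of_is_root_of_monic (K := ℚ) (r := r) hZ (by simpa [map_ofNat] using hr0)
  have hn' : (n : ℚ) = r := hn
  rw [← hn'] at hr0
  have h1 : n * (n ^ 2 - 3) = 1 := by
    have : n ^ 3 - 3 * n - 1 = 0 := by exact_mod_cast hr0
    linarith
  rcases Int.eq_one_or_neg_one_of_mul_eq_one h1 with h | h <;> subst h <;> norm_num at h1

lemma sextic_monic : (X ^ 6 - 3 * X ^ 2 - 1 : ℚ[X]).Monic := by monicity!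

lemma sextic_natDegree : (X ^ 6 - 3 * X ^ 2 - 1 : ℚ[X]).natDegree = 6 := by compute_degree!

/-- The existence of one nonreal root with real square suffices for irreducibility. -/
lemma sextic_irreducible (z : ℂ) (hz : z ∉ realSubfield) (hz2 : z ^ 2 ∈ realSubfield)
    (hroot : z ^ 6 - 3 * z ^ 2 - 1 = 0) : Irreducible (X ^ 6 - 3 * X ^ 2 - 1 : ℚ[X]) := by
  have hcub : aeval (z ^ 2) (X ^ 3 - 3 * X - 1 : ℚ[X]) = 0 := by
    simp only [map_sub, map_mul, map_pow, aeval_X, map_one, map_ofNat]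
    linear_combination hroot
  have hcm : (X ^ 3 - 3 * X - 1 : ℚ[X]).Monic := by monicity!
  have hmin := minpoly.eq_of_irreducible_of_monic cubic_irreducible hcub hcm
  have h3 : Module.finrank ℚ ℚ⟮z ^ 2⟯ = 3 := by
    rw [adjoin.finrank ⟨_, hcm, hcub⟩, ← hmin]; compute_degree!
  have h6 := finrank_adjoin_sqrt ℚ⟮z ^ 2⟯ z (fun h => hz (adjoin_simple_le_iff.2 hz2 h))
    (mem_adjoin_simple_self ℚ _)
  rw [adjoin_simple_adjoin_simple] at h6
  have heq : ℚ⟮z ^ 2, z⟯ = ℚ⟮z⟯ := by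
    refine le_antisymm (adjoin_le_iff.2 ?_) (adjoin.mono _ _ _ (by simp))
    rintro x (rfl | rfl)
    · exact pow_mem (mem_adjoin_simple_self ℚ z) 2
    · exact mem_adjoin_simple_self ℚ x
  have hr : aeval z (X ^ 6 - 3 * X ^ 2 - 1 : ℚ[X]) = 0 := by simpa [map_ofNat] using hroot
  have hint : IsIntegral ℚ z := ⟨_, sextic_monic, hr⟩
  rw [heq, h3, adjoin.finrank hint] at h6
  rw [eq_of_monic_of_dvd_of_natDegree_le (minpoly.monic hint) sextic_monic
    (minpoly.dvd ℚ z hr) (by rw [sextic_natDegree, h6])]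
  exact minpoly.irreducible hint

/-- The bound `2 < t ^ 4` makes the conjugate `2 - t ^ 4` of `t ^ 2` negative. -/
lemma exists_real_root : ∃ t : ℝ, 2 < t ^ 4 ∧ t ^ 6 - 3 * t ^ 2 - 1 = 0 := by
  have hc : ContinuousOn (fun t : ℝ => t ^ 6 - 3 * t ^ 2 - 1) (Set.Icc (13 / 10) 2) := by fun_prop
  obtain ⟨t, ht, h0⟩ := intermediate_value_Icc (by norm_num) hc
    (show (0 : ℝ) ∈ _ from ⟨by norm_num, by norm_num⟩)
  refine ⟨t, ?_, h0⟩
  have := pow_le_pow_left₀ (by norm_num) ht.1 4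
  norm_num at this
  linarith

theorem sextic_splitting_field_degree_twelve :
    Module.finrank ℚ (X ^ 6 - 3 * X ^ 2 - 1 : ℚ[X]).SplittingField = 12 := by
  obtain ⟨t, ht4, ht⟩ := exists_real_root
  have htC : (t : ℂ) ^ 6 - 3 * (t : ℂ) ^ 2 - 1 = 0 := by exact_mod_cast ht
  obtain ⟨z, hzdef⟩ : ∃ z : ℂ, z = Complex.I * (√(t ^ 4 - 2) : ℝ) := ⟨_, rfl⟩
  have hsq : z ^ 2 = 2 - (t : ℂ) ^ 4 := by
    have : ((√(t ^ 4 - 2) : ℝ) : ℂ) ^ 2 = (t : ℂ) ^ 4 - 2 := by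
      exact_mod_cast Real.sq_sqrt (by linarith : (0 : ℝ) ≤ t ^ 4 - 2)
    rw [hzdef, mul_pow, Complex.I_sq, this]; ring
  have hzR : z ∉ realSubfield := by
    rintro ⟨r, hr⟩
    have hr' : (r : ℂ) = z := hr
    have h := congrArg Complex.im hr'
    have := Real.sqrt_pos.2 (by linarith : (0 : ℝ) < t ^ 4 - 2)
    simp [hzdef] at h
    linarith
  have htR : (t : ℂ) ∈ realSubfield := ⟨t, rfl⟩
  have hz : z ^ 6 - 3 * z ^ 2 - 1 = 0 := by
    have : z ^ 6 = (z ^ 2) ^ 3 := by ring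
    rw [this, hsq]
    linear_combination (-((t : ℂ) ^ 6 - 3 * (t : ℂ) ^ 2 + 1)) * htC
  have hirr : Irreducible (X ^ 6 - 3 * X ^ 2 - 1 : ℚ[X]) :=
    sextic_irreducible z hzR (by
      rw [hsq]; exact sub_mem (ofNat_mem _ 2) (pow_mem htR 4)) hz
  have htroot : aeval (t : ℂ) (X ^ 6 - 3 * X ^ 2 - 1 : ℚ[X]) = 0 := by simpa [map_ofNat] using htC
  have h6 : Module.finrank ℚ ℚ⟮(t : ℂ)⟯ = 6 := by
    rw [adjoin.finrank ⟨_, sextic_monic, htroot⟩,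
      ← minpoly.eq_of_irreducible_of_monic hirr htroot sextic_monic, sextic_natDegree]
  have htF := mem_adjoin_simple_self ℚ (t : ℂ)
  have h12 := finrank_adjoin_sqrt ℚ⟮(t : ℂ)⟯ z (fun h => hzR (adjoin_simple_le_iff.2 htR h)) (by
      rw [hsq]; exact sub_mem (ofNat_mem _ 2) (pow_mem htF 4))
  rw [adjoin_simple_adjoin_simple, h6] at h12
  have hprod : ∀ x : ℂ, x ^ 6 - 3 * x ^ 2 - 1 =
      (x ^ 2 - t ^ 2) * (x ^ 2 - z ^ 2) * (x ^ 2 - ((t : ℂ) ^ 4 - t ^ 2 - 2)) := fun x => by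
    rw [hsq]
    linear_combination (x ^ 2 * ((t : ℂ) ^ 2 - 1) - (t : ℂ) ^ 4 + (t : ℂ) ^ 2 + 1) * htC
  have hinv : (t * z) ^ 2 * ((t : ℂ) ^ 4 - t ^ 2 - 2) = 1 := by
    linear_combination hprod 0
  have hset : adjoin ℚ ((X ^ 6 - 3 * X ^ 2 - 1 : ℚ[X]).rootSet ℂ) = adjoin ℚ {(t : ℂ), z} := by
    have hmem : ∀ x : ℂ, x ∈ (X ^ 6 - 3 * X ^ 2 - 1 : ℚ[X]).rootSet ℂ ↔
        x ^ 6 - 3 * x ^ 2 - 1 = 0 := fun x => by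
      rw [mem_rootSet_of_ne sextic_monic.ne_zero]; simp [map_ofNat]
    refine le_antisymm (adjoin_le_iff.2 fun x hx => ?_) (adjoin.mono _ _ _ ?_)
    · have ht' : (t : ℂ) ∈ adjoin ℚ {(t : ℂ), z} := subset_adjoin _ _ (by simp)
      have hz' : z ∈ adjoin ℚ {(t : ℂ), z} := subset_adjoin _ _ (by simp)
      have key : ∀ w ∈ adjoin ℚ {(t : ℂ), z}, x ^ 2 = w ^ 2 → x ∈ adjoin ℚ {(t : ℂ), z} := by
        intro w hw h
        rcases sq_eq_sq_iff_eq_or_eq_neg.1 h with rfl | rfl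
        · exact hw
        · exact neg_mem hw
      rw [hmem, hprod, mul_eq_zero, mul_eq_zero, sub_eq_zero, sub_eq_zero, sub_eq_zero] at hx
      rcases hx with (h | h) | h
      · exact key _ ht' h
      · exact key _ hz' h
      · refine key _ (inv_mem (mul_mem ht' hz')) ?_
        rw [h, inv_pow]
        exact eq_inv_of_mul_eq_one_right hinv
    · rintro x (rfl | rfl)
      · exact (hmem _).2 htC
      · exact (hmem _).2 hz
  have := adjoin_rootSet_isSplittingField (K := ℚ) (L := ℂ) (p := X ^ 6 - 3 * X ^ 2 - 1)
    (IsAlgClosed.splits _)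
  rw [hset] at this
  convert (finrank_splittingField this).trans h12
end

section
/- The Galois group of the splitting field of the polynomial X⁶ − 3X² − 1 over ℚ is isomorphic, as a group, to the alternating group A₄ on four letters. -/
open Polynomial

/-!
If `x₀, x₁, x₂` are square roots of the three roots `yᵢ` of `Y³ - 3Y - 1`, with signs chosen so that
`x₀x₁x₂ = 1`, the four sums `±x₀ ± x₁ ± x₂` with an even number of minus signs are the roots of the
quartic `X⁴ - 8X + 12`, and they generate the splitting field of `X⁶ - 3X² - 1`. The Galois group `G`
therefore acts faithfully on these four elements (`permHom`). Their Vandermonde determinant is `64`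
times that of the `yᵢ`, up to sign, so it is `±576`; being rational and nonzero, it forces the action
to be by even permutations. Hence `G` embeds in `A₄`.

The cubic is irreducible, so `3 ∣ |G|` and `|G|` is `3`, `6` or `12`. Order `3` is impossible: an
element of order dividing `3` in `S₄` has a fixed point, so the quartic would have a rational root,
although it is positive on `ℚ`. Order `6` is impossible because an index-two subgroup contains all
squares, hence all `3`-cycles, and these generate `A₄`. So `G` is all of `A₄`.
-/

namespace SexticA4

variable {L : Type*} [Field L] [Algebra ℚ L]

/-! ### Permutations of four conjugate elements -/

/-- The homomorphism to `S₄` by which the automorphisms of `L` permute the entries of an injective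
family `s` of four elements that they preserve. -/
noncomputable def permHom (s : Fin 4 → L) (hs : Function.Injective s)
    (h : ∀ (g : L ≃ₐ[ℚ] L) i, ∃ j, s j = g (s i)) : (L ≃ₐ[ℚ] L) →* Equiv.Perm (Fin 4) :=
  MonoidHom.toHomPerm
    { toFun := fun g i => (h g i).choose
      map_one' := by
        funext i
        exact hs ((h 1 i).choose_spec.trans rfl)
      map_mul' := fun a b => by
        funext i
        refine hs ((h (a * b) i).choose_spec.trans ?_)
        change a (b (s i)) = s ((h a ((h b i).choose)).choose)
        rw [(h a _).choose_spec, (h b i).choose_spec] }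

theorem permHom_spec (s : Fin 4 → L) (hs : Function.Injective s)
    (h : ∀ (g : L ≃ₐ[ℚ] L) i, ∃ j, s j = g (s i)) (g : L ≃ₐ[ℚ] L) (i : Fin 4) :
    s (permHom s hs h g i) = g (s i) :=
  (h g i).choose_spec

/-- A rational nonzero Vandermonde determinant forces the permutations to be even, since an odd one
would negate it. -/
theorem permHom_mem_alternating (s : Fin 4 → L) (hs : Function.Injective s)
    (h : ∀ (g : L ≃ₐ[ℚ] L) i, ∃ j, s j = g (s i)) (c : ℚ)
    (hc : (Matrix.vandermonde s).det = algebraMap ℚ L c) (g : L ≃ₐ[ℚ] L) :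
    permHom s hs h g ∈ alternatingGroup (Fin 4) := by
  rw [Equiv.Perm.mem_alternatingGroup]
  have hne : (Matrix.vandermonde s).det ≠ 0 := Matrix.det_vandermonde_ne_zero_iff.mpr hs
  have h1 : (Matrix.vandermonde s).submatrix (permHom s hs h g) id
      = g.toRingEquiv.toRingHom.mapMatrix (Matrix.vandermonde s) := by
    ext i j
    simp [Matrix.vandermonde_apply, permHom_spec]
  have h2 := Matrix.det_permute (permHom s hs h g) (Matrix.vandermonde s)
  rw [h1, ← RingHom.map_det] at h2
  have h3 : g.toRingEquiv.toRingHom (Matrix.vandermonde s).det = (Matrix.vandermonde s).det := by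
    rw [hc]
    exact g.commutes c
  rw [h3] at h2
  rcases Int.units_eq_one_or (Equiv.Perm.sign (permHom s hs h g)) with h4 | h4
  · exact h4
  · exfalso
    rw [h4] at h2
    have : CharZero L := algebraRat.charZero L
    apply hne
    push_cast at h2
    linear_combination (1 / 2) * h2

/-! ### Subgroups of `A₄` -/

theorem no_index_two (H : Subgroup (alternatingGroup (Fin 4))) : H.index ≠ 2 := by
  intro hH
  have key : ∀ c : alternatingGroup (Fin 4), (c : Equiv.Perm (Fin 4)).IsThreeCycle → c ∈ H := by
    intro c hc
    have h3 : c ^ 3 = 1 := by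
      apply Subtype.ext
      have := pow_orderOf_eq_one (c : Equiv.Perm (Fin 4))
      rw [hc.orderOf] at this
      simpa using this
    -- An element of order three is the square of its own square.
    have : c = (c ^ 2) ^ 2 := by
      calc c = c ^ 3 * c := by rw [h3, one_mul]
        _ = (c ^ 2) ^ 2 := by rw [← pow_succ, ← pow_mul]
    rw [this]
    exact Subgroup.sq_mem_of_index_two hH _
  have htop : H = ⊤ := by
    have hle : alternatingGroup (Fin 4) ≤ H.map (alternatingGroup (Fin 4)).subtype := by
      refine Equiv.Perm.closure_three_cycles_eq_alternating.symm.trans_le ?_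
      rw [Subgroup.closure_le]
      intro c hc
      exact ⟨⟨c, hc.mem_alternatingGroup⟩, key _ hc, rfl⟩
    rw [eq_top_iff]
    rintro ⟨x, hx⟩ -
    obtain ⟨y, hy, hyx⟩ := hle hx
    have : y = ⟨x, hx⟩ := Subtype.ext hyx
    exact this ▸ hy
  rw [htop] at hH
  simp at hH

theorem exists_fixed_of_cube : ∀ σ : Equiv.Perm (Fin 4), σ ^ 3 = 1 → ∃ i, σ i = i := by
  decide

/-- An injection of a group into `A₄` is onto as soon as `3` divides the order of the group and no
element of order dividing three generates it. -/
theorem bijective_of_injective {G : Type*} [Group G] (φ : G →* alternatingGroup (Fin 4))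
    (hφ : Function.Injective φ) (h3 : 3 ∣ Nat.card G)
    (hgen : ∀ g : G, g ^ 3 = 1 → ∃ h : G, h ∉ Subgroup.zpowers g) : Function.Bijective φ := by
  have hA : Nat.card (alternatingGroup (Fin 4)) = 12 := by
    rw [nat_card_alternatingGroup]; simp [Nat.factorial]
  have hcard : Nat.card φ.range = Nat.card G :=
    (Nat.card_congr (MonoidHom.ofInjective hφ).toEquiv).symm
  have hmul := φ.range.card_mul_index
  rw [hcard, hA] at hmul
  obtain ⟨k, hk⟩ := h3
  have hkm : k * φ.range.index = 4 := by rw [hk] at hmul; lia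
  have hk4 : k ≤ 4 := Nat.le_of_dvd (by norm_num) ⟨_, hkm.symm⟩
  have h2 := no_index_two φ.range
  refine ⟨hφ, MonoidHom.range_eq_top.mp (Subgroup.index_eq_one.mp ?_)⟩
  interval_cases k
  · omega
  · exfalso
    have : Fact (Nat.Prime 3) := ⟨Nat.prime_three⟩
    have hcyc : IsCyclic G := isCyclic_of_prime_card (p := 3) hk
    obtain ⟨g, hg⟩ := hcyc.exists_generator
    obtain ⟨h, hh⟩ := hgen g (by rw [← pow_card_eq_one' (x := g), hk])
    exact hh (hg h)
  all_goals omega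

/-! ### The cubic resolvent and the quartic -/

theorem cubic_irreducible : Irreducible (X ^ 3 - 3 * X - 1 : ℚ[X]) := by
  have hdeg : (X ^ 3 - 3 * X - 1 : ℚ[X]).natDegree = 3 := by
    have : (X ^ 3 - 3 * X - 1 : ℚ[X]) = X ^ 3 - C 3 * X - C 1 := by simp [map_ofNat]
    rw [this]; compute_degree!
  refine (irreducible_iff_roots_eq_zero_of_degree_le_three (by omega) (by omega)).mpr ?_
  rw [Multiset.eq_zero_iff_forall_notMem]
  intro r hr
  have hr0 : r ^ 3 - 3 * r - 1 = 0 := by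
    simpa using (mem_roots'.mp hr).2
  have hmon : (X ^ 3 - 3 * X - 1 : ℤ[X]).Monic := by
    have : (X ^ 3 - 3 * X - 1 : ℤ[X]) = X ^ 3 - C 3 * X - C 1 := by simp [map_ofNat]
    rw [this]; monicity!
  obtain ⟨n, hn⟩ := isInteger_of_is_root_of_monic (A := ℤ) (r := r) hmon (by simpa [map_ofNat] using hr0)
  have hn' : (n : ℚ) = r := by simpa using hn
  rw [← hn'] at hr0
  have h1 : n ^ 3 - 3 * n - 1 = 0 := by exact_mod_cast hr0
  have h2 : n * (n ^ 2 - 3) = 1 := by linarith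
  rcases Int.isUnit_iff.mp (IsUnit.of_mul_eq_one _ h2) with h | h <;> subst h <;> norm_num at h1

/-- The radicals `x₀, x₁, x₂`; the `yᵢ` are produced from one another by `y ↦ 2 - y²`, which permutes
the roots of `Y³ - 3Y - 1` cyclically. -/
theorem exists_radicals (hP : ((X ^ 6 - 3 * X ^ 2 - 1 : ℚ[X]).map (algebraMap ℚ L)).Splits) :
    ∃ y a b c : L, y ^ 3 - 3 * y - 1 = 0 ∧ a ^ 2 = y ∧ b ^ 2 = 2 - y ^ 2 ∧
      c ^ 2 = y ^ 2 - y - 2 ∧ a * b * c = 1 := by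
  have hmap : (X ^ 6 - 3 * X ^ 2 - 1 : ℚ[X]).map (algebraMap ℚ L)
      = X ^ 6 - C 3 * X ^ 2 - C 1 := by simp [map_ofNat]
  have hdeg : (X ^ 6 - C 3 * X ^ 2 - C 1 : L[X]).degree = 6 := by compute_degree!
  have hne : (X ^ 6 - C 3 * X ^ 2 - C 1 : L[X]) ≠ 0 := by
    intro h; rw [h] at hdeg; simp at hdeg
  rw [hmap] at hP
  obtain ⟨a, ha⟩ := hP.exists_eval_eq_zero (by rw [hdeg]; decide)
  have ha' : a ^ 6 - 3 * a ^ 2 - 1 = 0 := by simpa using ha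
  have root : ∀ z : L, z ^ 3 - 3 * z - 1 = 0 → ∃ b, b ^ 2 = z := by
    intro z hz
    have hd : (X ^ 2 - C z : L[X]) ∣ X ^ 6 - C 3 * X ^ 2 - C 1 := by
      refine ⟨X ^ 4 + C z * X ^ 2 + C (z ^ 2 - 3), ?_⟩
      have : (C (z ^ 3 - 3 * z - 1) : L[X]) = 0 := by rw [hz, C_0]
      simp only [C_sub, C_mul, C_pow] at this ⊢
      linear_combination this
    have h2 : (X ^ 2 - C z : L[X]).degree = 2 := by compute_degree!
    obtain ⟨b, hb⟩ := (hP.of_dvd hne hd).exists_eval_eq_zero (by rw [h2]; decide)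
    exact ⟨b, by simpa [sub_eq_zero] using hb⟩
  have hy : (a ^ 2) ^ 3 - 3 * a ^ 2 - 1 = 0 := by linear_combination ha'
  generalize hya : a ^ 2 = y at hy
  obtain ⟨b, hb⟩ := root (2 - y ^ 2) (by
    linear_combination (-y ^ 3 + 3 * y - 1) * hy)
  obtain ⟨c, hc⟩ := root (y ^ 2 - y - 2) (by
    linear_combination (y ^ 3 - 3 * y ^ 2 + 3) * hy)
  have hsq : (a * b * c) ^ 2 = 1 := by
    rw [mul_pow, mul_pow, hya, hb, hc]
    linear_combination (-y ^ 2 + y + 1) * hy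
  rcases (sq_eq_sq_iff_eq_or_eq_neg.mp (hsq.trans (one_pow 2).symm)) with h | h
  · exact ⟨y, a, b, c, hy, hya, hb, hc, h⟩
  · exact ⟨y, a, b, -c, hy, hya, hb, by rw [neg_sq, hc], by linear_combination -h⟩

/-- The conjugates of `a + b + c` under even numbers of sign changes. -/
def signedSums (a b c : L) : Fin 4 → L :=
  ![a + b + c, a - b - c, -a + b - c, -a - b + c]

theorem det_vandermonde_signedSums {y a b c : L} (hy : y ^ 3 - 3 * y - 1 = 0) (ha : a ^ 2 = y)
    (hb : b ^ 2 = 2 - y ^ 2) (hc : c ^ 2 = y ^ 2 - y - 2) :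
    (Matrix.vandermonde (signedSums a b c)).det = algebraMap ℚ L (-576) := by
  have h1 : (Matrix.vandermonde (signedSums a b c)).det
      = -64 * ((b ^ 2 - a ^ 2) * (c ^ 2 - a ^ 2) * (c ^ 2 - b ^ 2)) := by
    have hs : signedSums a b c = ![a + b + c, a - b - c, -a + b - c, -a - b + c] := rfl
    have h01 : Finset.Ioi (0 : Fin 4) = {1, 2, 3} := by decide
    have h11 : Finset.Ioi (1 : Fin 4) = {2, 3} := by decide
    have h21 : Finset.Ioi (2 : Fin 4) = {3} := by decide
    have h31 : Finset.Ioi (3 : Fin 4) = ∅ := by decide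
    rw [Matrix.det_vandermonde, Fin.prod_univ_four, h01, h11, h21, h31, hs]
    simp
    ring
  rw [h1, ha, hb, hc, map_neg, map_ofNat]
  linear_combination (-64) * ((1 - y) * (2 * y ^ 2 - y - 4) + 3 * (2 * y - 1)) * hy

/-- The signed sums are the roots of the quartic, since `a² + b² + c² = 0`,
`a²b² + a²c² + b²c² = -3` and `abc = 1`. -/
theorem quartic_iff {L : Type*} [Field L] {y a b c : L} (hy : y ^ 3 - 3 * y - 1 = 0) (ha : a ^ 2 = y)
    (hb : b ^ 2 = 2 - y ^ 2) (hc : c ^ 2 = y ^ 2 - y - 2) (habc : a * b * c = 1) (t : L) :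
    t ^ 4 - 8 * t + 12 = 0 ↔ ∃ i, signedSums a b c i = t := by
  have e1 : a ^ 2 + b ^ 2 + c ^ 2 = 0 := by rw [ha, hb, hc]; ring
  have e2 : a ^ 2 * b ^ 2 + a ^ 2 * c ^ 2 + b ^ 2 * c ^ 2 = -3 := by
    rw [ha, hb, hc]
    linear_combination (1 - y) * hy
  have key : t ^ 4 - 8 * t + 12 = (t - (a + b + c)) * (t - (a - b - c)) * (t - (-a + b - c)) *
      (t - (-a - b + c)) := by
    linear_combination (2 * t ^ 2 - (a ^ 2 + b ^ 2 + c ^ 2)) * e1 + 4 * e2 + 8 * t * habc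
  rw [key]
  simp [Fin.exists_fin_succ, signedSums, sub_eq_zero, eq_comm (a := t), or_assoc]

/-! ### The Galois group -/

/-- The result for any splitting field, so that the `ℚ`-algebra structure on it is left open. -/
theorem main [IsSplittingField ℚ L (X ^ 6 - 3 * X ^ 2 - 1 : ℚ[X])] [FiniteDimensional ℚ L]
    [IsGalois ℚ L] : Nonempty ((L ≃ₐ[ℚ] L) ≃* alternatingGroup (Fin 4)) := by
  have : CharZero L := algebraRat.charZero L
  obtain ⟨y, a, b, c, hy, ha, hb, hc, habc⟩ := exists_radicals
    (IsSplittingField.splits L (X ^ 6 - 3 * X ^ 2 - 1 : ℚ[X]))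
  have hdet := det_vandermonde_signedSums hy ha hb hc
  have hroot := quartic_iff hy ha hb hc habc
  have hval : signedSums a b c 0 = a + b + c ∧ signedSums a b c 1 = a - b - c ∧
      signedSums a b c 2 = -a + b - c := ⟨rfl, rfl, rfl⟩
  generalize signedSums a b c = s at hdet hroot hval
  have hs : Function.Injective s := by
    rw [← Matrix.det_vandermonde_ne_zero_iff, hdet]
    simp
  have hperm : ∀ (g : L ≃ₐ[ℚ] L) i, ∃ j, s j = g (s i) := by
    intro g i
    rw [← hroot]
    simpa [map_ofNat] using congrArg g ((hroot (s i)).mpr ⟨i, rfl⟩)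
  let φ : (L ≃ₐ[ℚ] L) →* alternatingGroup (Fin 4) :=
    (permHom s hs hperm).codRestrict _ (permHom_mem_alternating s hs hperm _ hdet)
  have hφ : ∀ g i, s ((φ g : Equiv.Perm (Fin 4)) i) = g (s i) := permHom_spec s hs hperm
  refine ⟨MulEquiv.ofBijective φ (bijective_of_injective φ ?_ ?_ ?_)⟩
  · rw [injective_iff_map_eq_one]
    intro g hg
    have hfix : ∀ i, g (s i) = s i := fun i => by rw [← hφ, hg]; rfl
    have h0 := hfix 0
    have h1 := hfix 1
    have h2 := hfix 2
    rw [hval.1] at h0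
    rw [hval.2.1] at h1
    rw [hval.2.2] at h2
    simp only [map_add, map_sub, map_neg] at h0 h1 h2
    have ga : g a = a := by linear_combination (h0 + h1) / 2
    have gb : g b = b := by linear_combination (h0 + h2) / 2
    have gc : g c = c := by linear_combination -(h1 + h2) / 2
    have hext : (g : L →ₐ[ℚ] L) = AlgHom.id ℚ L := by
      refine AlgHom.ext_of_adjoin_eq_top
        (IsSplittingField.adjoin_rootSet L (X ^ 6 - 3 * X ^ 2 - 1 : ℚ[X])) ?_
      intro r hr
      have hr0 : r ^ 6 - 3 * r ^ 2 - 1 = 0 := by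
        simpa [map_ofNat] using aeval_eq_zero_of_mem_rootSet hr
      have hfac : (r ^ 2 - a ^ 2) * (r ^ 2 - b ^ 2) * (r ^ 2 - c ^ 2) = 0 := by
        rw [ha, hb, hc]
        linear_combination hr0 + (r ^ 2 * (1 - y) - (-y ^ 2 + y + 1)) * hy
      simp only [mul_eq_zero, sub_eq_zero, sq_eq_sq_iff_eq_or_eq_neg] at hfac
      rcases hfac with ((rfl | rfl) | rfl | rfl) | rfl | rfl <;> simp [ga, gb, gc]
    ext x
    exact DFunLike.congr_fun hext x
  · rw [IsGalois.card_aut_eq_finrank]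
    have hmin : minpoly ℚ y = X ^ 3 - 3 * X - 1 := by
      refine (minpoly.eq_of_irreducible_of_monic cubic_irreducible ?_ ?_).symm
      · simpa [map_ofNat] using hy
      · have : (X ^ 3 - 3 * X - 1 : ℚ[X]) = X ^ 3 - C 3 * X - C 1 := by simp [map_ofNat]
        rw [this]; monicity!
    have hd := minpoly.degree_dvd (K := ℚ) (Algebra.IsIntegral.isIntegral y)
    rw [hmin] at hd
    have : (X ^ 3 - 3 * X - 1 : ℚ[X]).natDegree = 3 := by
      have : (X ^ 3 - 3 * X - 1 : ℚ[X]) = X ^ 3 - C 3 * X - C 1 := by simp [map_ofNat]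
      rw [this]; compute_degree!
    rwa [this] at hd
  · intro g hg
    obtain ⟨i, hi⟩ := exists_fixed_of_cube (φ g) (by
      have := congrArg (Subtype.val) (congrArg φ hg)
      simpa using this)
    by_contra! hall
    have hgi : g (s i) = s i := by rw [← hφ, hi]
    have hfix : ∀ h : L ≃ₐ[ℚ] L, h (s i) = s i := by
      intro h
      have hle : Subgroup.zpowers g ≤ MulAction.stabilizer (L ≃ₐ[ℚ] L) (s i) := by
        rw [Subgroup.zpowers_le]
        exact hgi
      exact hle (hall h)
    obtain ⟨q, hq⟩ := (IsGalois.mem_range_algebraMap_iff_fixed (s i)).mpr hfix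
    have h4 := (hroot (s i)).mpr ⟨i, rfl⟩
    rw [← hq] at h4
    have h5 : q ^ 4 - 8 * q + 12 = 0 := by
      apply (algebraMap ℚ L).injective
      simpa [map_ofNat] using h4
    nlinarith [sq_nonneg (q ^ 2 - 2), sq_nonneg (q - 1)]

end SexticA4

theorem sextic_galois_group_iso_A4 :
    Nonempty (((X ^ 6 - 3 * X ^ 2 - 1 : ℚ[X]).SplittingField ≃ₐ[ℚ]
        (X ^ 6 - 3 * X ^ 2 - 1 : ℚ[X]).SplittingField) ≃*
      alternatingGroup (Fin 4)) := by
  -- The `ℚ`-algebra structure coming from characteristic zero and that of the splitting field are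
  -- equal, but not by unfolding.
  have hsplit : IsSplittingField ℚ (X ^ 6 - 3 * X ^ 2 - 1 : ℚ[X]).SplittingField
      (X ^ 6 - 3 * X ^ 2 - 1 : ℚ[X]) := by
    convert IsSplittingField.splittingField (X ^ 6 - 3 * X ^ 2 - 1 : ℚ[X])
    exact Subsingleton.elim _ _
  have hfin := IsSplittingField.finiteDimensional
    (X ^ 6 - 3 * X ^ 2 - 1 : ℚ[X]).SplittingField (X ^ 6 - 3 * X ^ 2 - 1 : ℚ[X])
  have hnormal := Normal.of_isSplittingField (F := ℚ)
    (E := (X ^ 6 - 3 * X ^ 2 - 1 : ℚ[X]).SplittingField) (X ^ 6 - 3 * X ^ 2 - 1 : ℚ[X])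
  have hgal : IsGalois ℚ (X ^ 6 - 3 * X ^ 2 - 1 : ℚ[X]).SplittingField := {}
  exact SexticA4.main
end

section
/- The splitting field K of the polynomial X⁶ − 3X² − 1 over ℚ has exactly 10 intermediate fields (subfields of K containing ℚ), corresponding via the Galois correspondence to the 10 subgroups of its Galois group A₄. -/
/-!
The roots of `Y³ - 3Y - 1` are `y`, `2 - y²` and `y² - y - 2`, with product `1`. Hence the roots of
the sextic are `±a, ±b, ±c`, where `a² = y`, `b² = 2 - y²`, `c² = y² - y - 2` and the signs can be
chosen with `abc = 1` (`exists_sqrtTriple`). The four numbers `±a ± b ± c` with an even number of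
minus signs generate the same field `K` and are the roots of `t⁴ - 8t + 12`
(`SqrtTriple.quartic_factor`). The Galois group acts faithfully on them, and by even permutations
because their Vandermonde determinant is `-576`, a nonzero rational (`SqrtTriple.exists_perm`); this
embeds it into `A₄`.

The embedding is onto. The cubic has no rational root, so some automorphism moves `y`; it is not an
involution (`SqrtTriple.map_sq_of_involution`), hence acts as a three-cycle. The quartic
`(t² - 2)² + 4 (t - 1)² + 4` has no rational root either, so the point fixed by this three-cycle is
moved by another automorphism, and a three-cycle `h` together with any element outside `{1, h, h²}`
generates `A₄` (`A4.eq_top`).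

The same generation statement classifies the subgroups of `A₄`: a subgroup with a three-cycle is
cyclic or everything, and one without lies in the Klein four-group, so that it is cyclic or equal to
it. This leaves `3 + 4 + 1` cyclic subgroups, the four-group and `A₄` (`A4.card_subgroup`).
-/

open Polynomial

/-! ### Subgroups of `A₄` -/

/-- The elements `h` of `A₄` with `h² ≠ 1` are the three-cycles. For `g` outside `C = {1, h, h²}` the
double coset `C g C` has nine elements, so it is the complement of `C`. -/
theorem A4.word_of_threeCycle : ∀ h g : alternatingGroup (Fin 4), h * h ≠ 1 →
    g ∉ ({1, h, h * h} : Finset (alternatingGroup (Fin 4))) →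
    ∀ k, ∃ x ∈ ({1, h, h * h} : Finset (alternatingGroup (Fin 4))),
      ∃ y ∈ ({1, h, h * h} : Finset (alternatingGroup (Fin 4))), k = x ∨ k = x * g * y := by
  decide +kernel

theorem A4.exists_fixed_of_threeCycle : ∀ h : alternatingGroup (Fin 4), h * h ≠ 1 →
    ∃ i, (h : Equiv.Perm (Fin 4)) i = i := by
  decide +kernel

theorem A4.involution_cases : ∀ g h k : alternatingGroup (Fin 4), g * g = 1 → h * h = 1 →
    g ≠ 1 → h ≠ 1 → h ≠ g → k * k = 1 → k = 1 ∨ k = g ∨ k = h ∨ k = g * h := by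
  decide +kernel

theorem A4.sq_mul_eq_one : ∀ g h : alternatingGroup (Fin 4), g * g = 1 → h * h = 1 →
    g * h * (g * h) = 1 := by
  decide +kernel

theorem A4.mul_mem_powers : ∀ g x y : alternatingGroup (Fin 4),
    x ∈ ({1, g, g * g} : Finset (alternatingGroup (Fin 4))) ∧
      y ∈ ({1, g, g * g} : Finset (alternatingGroup (Fin 4))) →
    x * y ∈ ({1, g, g * g} : Finset (alternatingGroup (Fin 4))) := by
  decide +kernel

theorem A4.inv_mem_powers : ∀ g : alternatingGroup (Fin 4),
    ∀ x ∈ ({1, g, g * g} : Finset (alternatingGroup (Fin 4))),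
    x⁻¹ ∈ ({1, g, g * g} : Finset (alternatingGroup (Fin 4))) := by
  decide +kernel

theorem A4.mem_powers {H : Subgroup (alternatingGroup (Fin 4))} {h x : alternatingGroup (Fin 4)}
    (hh : h ∈ H) (hx : x ∈ ({1, h, h * h} : Finset (alternatingGroup (Fin 4)))) : x ∈ H := by
  simp only [Finset.mem_insert, Finset.mem_singleton] at hx
  rcases hx with rfl | rfl | rfl
  exacts [H.one_mem, hh, H.mul_mem hh hh]

theorem A4.eq_top {H : Subgroup (alternatingGroup (Fin 4))} {h g : alternatingGroup (Fin 4)}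
    (hh : h ∈ H) (hg : g ∈ H) (h2 : h * h ≠ 1)
    (hgh : g ∉ ({1, h, h * h} : Finset (alternatingGroup (Fin 4)))) : H = ⊤ := by
  refine (Subgroup.eq_top_iff' H).2 fun k => ?_
  obtain ⟨x, hx, y, hy, rfl | rfl⟩ := A4.word_of_threeCycle h g h2 hgh k
  · exact A4.mem_powers hh hx
  · exact H.mul_mem (H.mul_mem (A4.mem_powers hh hx) hg) (A4.mem_powers hh hy)

/-- The underlying sets of the subgroups of `A₄`: the whole group, the Klein four-group (described
as the set of solutions of `g² = 1`) and the cyclic subgroups. -/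
def A4.subgroupCarriers : Finset (Finset (alternatingGroup (Fin 4))) :=
  insert Finset.univ (insert (Finset.univ.filter fun g => g * g = 1)
    (Finset.univ.image fun g => {1, g, g * g}))

theorem A4.card_subgroupCarriers : A4.subgroupCarriers.card = 10 := by
  decide +kernel

/-- Since every element of `A₄` has order at most three, `{1, g, g²}` is the subgroup generated
by `g`. -/
theorem A4.exists_subgroup {s : Finset (alternatingGroup (Fin 4))}
    (hs : s ∈ A4.subgroupCarriers) :
    ∃ H : Subgroup (alternatingGroup (Fin 4)), (H : Set (alternatingGroup (Fin 4))) = s := by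
  simp only [A4.subgroupCarriers, Finset.mem_insert, Finset.mem_image, Finset.mem_univ,
    true_and] at hs
  rcases hs with rfl | rfl | ⟨g, rfl⟩
  · exact ⟨⊤, by simp⟩
  · refine ⟨⟨⟨⟨{g | g * g = 1}, fun {a b} ha hb => A4.sq_mul_eq_one a b ha hb⟩,
      mul_one 1⟩, fun {a} ha => ?_⟩, by ext; simp⟩
    change a⁻¹ * a⁻¹ = 1
    rw [← mul_inv_rev, inv_eq_one]
    exact ha
  · exact ⟨⟨⟨⟨({1, g, g * g} : Finset (alternatingGroup (Fin 4))),
      fun {a b} ha hb => A4.mul_mem_powers g a b ⟨ha, hb⟩⟩, by simp⟩,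
      fun {a} ha => A4.inv_mem_powers g a ha⟩, rfl⟩

/-- Every subgroup of `A₄` is cyclic, the Klein four-group or the whole group. -/
theorem A4.carrier_mem (H : Subgroup (alternatingGroup (Fin 4))) :
    ∃ s ∈ A4.subgroupCarriers, (H : Set (alternatingGroup (Fin 4))) = s := by
  simp only [A4.subgroupCarriers, Finset.mem_insert, Finset.mem_image, Finset.mem_univ,
    true_and, exists_eq_or_imp, exists_exists_eq_and]
  by_cases h3 : ∃ h ∈ H, h * h ≠ 1
  · obtain ⟨h, hh, h2⟩ := h3
    by_cases hg : ∃ g ∈ H, g ∉ ({1, h, h * h} : Finset (alternatingGroup (Fin 4)))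
    · obtain ⟨g, hg, hgh⟩ := hg
      left
      rw [A4.eq_top hh hg h2 hgh]
      simp
    · push Not at hg
      exact .inr <| .inr ⟨h, Set.Subset.antisymm hg fun x hx => A4.mem_powers hh hx⟩
  · push Not at h3
    by_cases h1 : ∃ v ∈ H, v ≠ 1
    · obtain ⟨v, hv, hv1⟩ := h1
      by_cases hw : ∃ w ∈ H, w ≠ 1 ∧ w ≠ v
      · obtain ⟨w, hw, hw1, hwv⟩ := hw
        right; left
        ext k
        simp only [SetLike.mem_coe, Finset.coe_filter, Finset.mem_univ, true_and,
          Set.mem_ofPred_eq]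
        refine ⟨h3 k, fun hk => ?_⟩
        rcases A4.involution_cases v w k (h3 v hv) (h3 w hw) hv1 hw1 hwv hk with
          rfl | rfl | rfl | rfl
        exacts [H.one_mem, hv, hw, H.mul_mem hv hw]
      · push Not at hw
        refine .inr <| .inr ⟨v, Set.Subset.antisymm (fun x hx => ?_)
          fun x hx => A4.mem_powers hv hx⟩
        by_cases hx1 : x = 1
        · simp [hx1]
        · simp [hw x hx hx1]
    · push Not at h1
      exact .inr <| .inr ⟨1, Set.Subset.antisymm (fun x hx => by simp [h1 x hx])
        fun x hx => A4.mem_powers H.one_mem hx⟩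

theorem A4.card_subgroup : Nat.card (Subgroup (alternatingGroup (Fin 4))) = 10 := by
  choose s hs hHs using A4.carrier_mem
  rw [← A4.card_subgroupCarriers, ← Nat.card_eq_finsetCard]
  refine Nat.card_eq_of_bijective (fun H => (⟨s H, hs H⟩ : A4.subgroupCarriers)) ⟨?_, ?_⟩
  · intro H H' h
    have h' : s H = s H' := congrArg Subtype.val h
    exact SetLike.coe_injective (by rw [hHs, hHs, h'])
  · rintro ⟨t, ht⟩
    obtain ⟨H, hH⟩ := A4.exists_subgroup ht
    exact ⟨H, Subtype.ext (Finset.coe_injective (by rw [← hHs, hH]))⟩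

/-! ### Rational roots -/

theorem no_rat_root_cubic (r : ℚ) : r ^ 3 - 3 * r - 1 ≠ 0 := by
  intro hr
  have hm : (X ^ 3 - 3 * X - 1 : ℤ[X]).Monic := by monicity!
  obtain ⟨n, hn⟩ := isInteger_of_is_root_of_monic (K := ℚ) hm (r := r)
    (by simpa [map_ofNat] using hr)
  have h : n ^ 3 - 3 * n - 1 = 0 := by
    rw [← hn, eq_intCast] at hr
    exact_mod_cast hr
  -- `n³ - 3n = n (n² - 3)` is even for every integer `n`.
  have h2 : (n : ZMod 2) ^ 3 - 3 * n - 1 = 0 := by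
    exact_mod_cast congrArg (Int.cast (R := ZMod 2)) h
  revert h2
  generalize (n : ZMod 2) = m
  revert m
  decide

theorem no_rat_root_quartic (r : ℚ) : r ^ 4 - 8 * r + 12 ≠ 0 := by
  have h : r ^ 4 - 8 * r + 12 = (r ^ 2 - 2) ^ 2 + 4 * (r - 1) ^ 2 + 4 := by ring
  rw [h]
  positivity

/-! ### The roots of the sextic and of the quartic -/

/-- Square roots `a, b, c` of the three roots `y, 2 - y², y² - y - 2` of `Y³ - 3Y - 1`, with signs
chosen so that `abc = 1`; here `y = a²`. The six roots of the sextic are then `±a, ±b, ±c`. -/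
structure SqrtTriple {K : Type*} [Field K] (a b c : K) : Prop where
  root : a ^ 6 - 3 * a ^ 2 - 1 = 0
  sq_b : b ^ 2 = 2 - a ^ 4
  sq_c : c ^ 2 = a ^ 4 - a ^ 2 - 2
  prod : a * b * c = 1

theorem exists_sqrtTriple (K : Type*) [Field K] [Algebra ℚ K]
    [IsSplittingField ℚ K (X ^ 6 - 3 * X ^ 2 - 1 : ℚ[X])] :
    ∃ a b c : K, SqrtTriple a b c := by
  have hs : (X ^ 6 - 3 * X ^ 2 - 1 : K[X]).Splits := by
    have := IsSplittingField.splits K (X ^ 6 - 3 * X ^ 2 - 1 : ℚ[X])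
    rwa [Polynomial.map_sub, Polynomial.map_sub, Polynomial.map_mul, Polynomial.map_pow,
      Polynomial.map_pow, map_X, Polynomial.map_one, Polynomial.map_ofNat] at this
  have hd : (X ^ 6 - 3 * X ^ 2 - 1 : K[X]).degree = 6 := by compute_degree!
  obtain ⟨a, ha⟩ := hs.exists_eval_eq_zero (by rw [hd]; decide)
  have ha : a ^ 6 - 3 * a ^ 2 - 1 = 0 := by simpa using ha
  -- The quadratic with roots `±b` divides the sextic, so it splits as well.
  have hdvd : (X ^ 2 - C (2 - a ^ 4) : K[X]) ∣ X ^ 6 - 3 * X ^ 2 - 1 := by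
    refine ⟨(X ^ 2 - C (a ^ 2)) * (X ^ 2 - C (a ^ 4 - a ^ 2 - 2)), ?_⟩
    have hC : (C a ^ 6 - 3 * C a ^ 2 - 1 : K[X]) = 0 := by
      simpa only [C_sub, C_mul, C_pow, C_ofNat, C_1, C_0] using congrArg C ha
    simp only [C_sub, C_pow, C_ofNat]
    linear_combination (X ^ 2 * (C a ^ 2 - 1) + 1 - C a ^ 4 + C a ^ 2) * hC
  have hs2 := hs.of_dvd (fun h => by simp [h] at hd) hdvd
  obtain ⟨b, hb⟩ := hs2.exists_eval_eq_zero (by rw [degree_X_pow_sub_C (by norm_num)]; decide)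
  have hb : b ^ 2 = 2 - a ^ 4 := by simpa [sub_eq_zero] using hb
  -- The third square root is `1 / (ab)`, written without a division.
  refine ⟨a, b, a * b * (a ^ 4 - a ^ 2 - 2), ha, hb, ?_, ?_⟩
  · linear_combination (a ^ 2 * (a ^ 4 - a ^ 2 - 2) ^ 2) * hb +
      (-a ^ 8 + 2 * a ^ 6 + 2 * a ^ 4 - 3 * a ^ 2 - 2) * ha
  · linear_combination (a ^ 2 * (a ^ 4 - a ^ 2 - 2)) * hb + (-a ^ 4 + a ^ 2 + 1) * ha

/-- The four sums `±a ± b ± c` with an even number of minus signs. -/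
def quarticRoot {K : Type*} [Field K] (a b c : K) : Fin 4 → K :=
  ![a + b + c, a - b - c, -a + b - c, -a - b + c]

namespace SqrtTriple

variable {K : Type*} [Field K] {a b c : K}

theorem sum_sq (h : SqrtTriple a b c) : a ^ 2 + b ^ 2 + c ^ 2 = 0 := by
  linear_combination h.sq_b + h.sq_c

theorem sum_sq_mul_sq (h : SqrtTriple a b c) :
    a ^ 2 * b ^ 2 + a ^ 2 * c ^ 2 + b ^ 2 * c ^ 2 = -3 := by
  rw [h.sq_b, h.sq_c]
  linear_combination (-a ^ 2 + 1) * h.root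

theorem sextic_factor (h : SqrtTriple a b c) (x : K) :
    (x - a) * (x + a) * (x - b) * (x + b) * (x - c) * (x + c) = x ^ 6 - 3 * x ^ 2 - 1 := by
  linear_combination (-x ^ 4) * h.sum_sq + x ^ 2 * h.sum_sq_mul_sq - (a * b * c + 1) * h.prod

theorem quartic_factor (h : SqrtTriple a b c) (t : K) :
    ∏ i, (t - quarticRoot a b c i) = t ^ 4 - 8 * t + 12 := by
  simp only [Fin.prod_univ_four, quarticRoot, Matrix.cons_val]
  linear_combination (-2 * t ^ 2 + (a ^ 2 + b ^ 2 + c ^ 2)) * h.sum_sq - 4 * h.sum_sq_mul_sq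
    - 8 * t * h.prod

theorem exists_eq_quarticRoot (h : SqrtTriple a b c) {t : K} (ht : t ^ 4 - 8 * t + 12 = 0) :
    ∃ i, t = quarticRoot a b c i := by
  rw [← h.quartic_factor, Finset.prod_eq_zero_iff] at ht
  obtain ⟨i, -, hi⟩ := ht
  exact ⟨i, sub_eq_zero.1 hi⟩

theorem quarticRoot_eq (h : SqrtTriple a b c) (i : Fin 4) :
    quarticRoot a b c i ^ 4 - 8 * quarticRoot a b c i + 12 = 0 := by
  rw [← h.quartic_factor, Finset.prod_eq_zero_iff]
  exact ⟨i, Finset.mem_univ i, sub_self _⟩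

/-- The square root of the discriminant of the quartic is rational. -/
theorem det_vandermonde (h : SqrtTriple a b c) :
    (Matrix.vandermonde (quarticRoot a b c)).det = -576 := by
  have hdet : (Matrix.vandermonde (quarticRoot a b c)).det =
      -64 * ((b ^ 2 - a ^ 2) * (c ^ 2 - a ^ 2) * (c ^ 2 - b ^ 2)) := by
    have h0 : Finset.Ioi (0 : Fin 4) = {1, 2, 3} := by decide
    have h1 : Finset.Ioi (1 : Fin 4) = {2, 3} := by decide
    have h2 : Finset.Ioi (2 : Fin 4) = {3} := by decide
    have h3 : Finset.Ioi (3 : Fin 4) = ∅ := by decide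
    rw [Matrix.det_vandermonde, Fin.prod_univ_four, h0, h1, h2, h3]
    simp [quarticRoot]
    ring
  rw [hdet, h.sq_b, h.sq_c]
  linear_combination (-64 * (-2 * a ^ 6 + 3 * a ^ 4 + 9 * a ^ 2 - 7)) * h.root

theorem quarticRoot_injective (h : SqrtTriple a b c) [CharZero K] :
    Function.Injective (quarticRoot a b c) := by
  rw [← Matrix.det_vandermonde_ne_zero_iff, h.det_vandermonde]
  norm_num

/-! ### The action of the Galois group -/

variable [Algebra ℚ K]

/-- The action of the Galois group on the roots of the quartic, by even permutations. -/
theorem exists_perm (h : SqrtTriple a b c) [CharZero K] :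
    ∃ π : (K ≃ₐ[ℚ] K) →* alternatingGroup (Fin 4),
    ∀ σ i, σ (quarticRoot a b c i) = quarticRoot a b c ((π σ : Equiv.Perm (Fin 4)) i) := by
  have hex (σ : K ≃ₐ[ℚ] K) (i : Fin 4) :
      ∃ j, σ (quarticRoot a b c i) = quarticRoot a b c j :=
    h.exists_eq_quarticRoot (by simpa [map_ofNat] using congrArg σ (h.quarticRoot_eq i))
  choose f hf using hex
  let F : (K ≃ₐ[ℚ] K) →* Function.End (Fin 4) :=
    { toFun := f
      map_one' := funext fun i => h.quarticRoot_injective (hf 1 i).symm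
      map_mul' := fun σ τ => funext fun i => h.quarticRoot_injective <| by
        rw [← hf, AlgEquiv.mul_apply, hf, hf]; rfl }
  refine ⟨F.toHomPerm.codRestrict (alternatingGroup (Fin 4)) fun σ => ?_, hf⟩
  -- Permuting the roots multiplies the Vandermonde determinant by the sign of the permutation,
  -- while `σ` fixes this determinant because it is rational.
  have h1 : (Matrix.vandermonde (quarticRoot a b c)).submatrix (F.toHomPerm σ) id =
      σ.toRingHom.mapMatrix (Matrix.vandermonde (quarticRoot a b c)) := by
    ext i j
    simp [Matrix.vandermonde_apply, hf]
    rfl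
  have h2 := Matrix.det_permute (F.toHomPerm σ) (Matrix.vandermonde (quarticRoot a b c))
  rw [h1, ← RingHom.map_det, h.det_vandermonde] at h2
  rw [Equiv.Perm.mem_alternatingGroup]
  rcases Int.units_eq_one_or (Equiv.Perm.sign (F.toHomPerm σ)) with h3 | h3
  · exact h3
  · rw [h3] at h2
    norm_num [map_ofNat] at h2

/-- The action on the roots of the quartic is faithful, since `a`, `b` and `c` are linear
combinations of these roots. -/
theorem algEquiv_eq_one (h : SqrtTriple a b c)
    [IsSplittingField ℚ K (X ^ 6 - 3 * X ^ 2 - 1 : ℚ[X])] [CharZero K]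
    {σ : K ≃ₐ[ℚ] K} (hσ : ∀ i, σ (quarticRoot a b c i) = quarticRoot a b c i) : σ = 1 := by
  have h0 := hσ 0
  have h1 := hσ 1
  have h2 := hσ 2
  simp only [quarticRoot, Matrix.cons_val, map_add, map_sub, map_neg] at h0 h1 h2
  have ha : σ a = a := by linear_combination (h0 + h1) / 2
  have hb : σ b = b := by linear_combination (h0 + h2) / 2
  have hc : σ c = c := by linear_combination -(h1 + h2) / 2
  have hfix : Set.EqOn (σ : K →ₐ[ℚ] K) (AlgHom.id ℚ K)
      ((X ^ 6 - 3 * X ^ 2 - 1 : ℚ[X]).rootSet K) := by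
    intro x hx
    have hx' : x ^ 6 - 3 * x ^ 2 - 1 = 0 := by
      simpa [map_ofNat] using aeval_eq_zero_of_mem_rootSet hx
    rw [← h.sextic_factor] at hx'
    simp only [mul_eq_zero, sub_eq_zero, add_eq_zero_iff_eq_neg, or_assoc] at hx'
    rcases hx' with rfl | rfl | rfl | rfl | rfl | rfl <;> simp [ha, hb, hc]
  have := AlgHom.ext_of_adjoin_eq_top
    (IsSplittingField.adjoin_rootSet K (X ^ 6 - 3 * X ^ 2 - 1 : ℚ[X])) hfix
  exact AlgEquiv.ext fun x => DFunLike.congr_fun this x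

/-- An automorphism acts on the roots of the cubic by iterating `y ↦ 2 - y²`, a map of order three
on these roots, so an involution has to fix them. -/
theorem map_sq_of_involution (h : SqrtTriple a b c) [CharZero K] {σ : K ≃ₐ[ℚ] K} (hσ : σ * σ = 1) :
    σ (a ^ 2) = a ^ 2 := by
  have hσσ : σ (σ a) = a := DFunLike.congr_fun hσ a
  have h1 := congrArg σ h.root
  simp only [map_sub, map_mul, map_pow, map_ofNat, map_one, map_zero] at h1
  rw [← h.sextic_factor] at h1
  have h2 : (σ a ^ 2 - a ^ 2) * (σ a ^ 2 - b ^ 2) * (σ a ^ 2 - c ^ 2) = 0 := by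
    linear_combination h1
  simp only [mul_eq_zero, sub_eq_zero, h.sq_b, h.sq_c, or_assoc] at h2
  rw [map_pow]
  rcases h2 with h2 | h2 | h2
  · exact h2
  -- In the two remaining cases applying `σ` once more gives a quadratic equation for `a²`, which is
  -- coprime to the cubic.
  · have h3 := congrArg σ h2
    simp only [map_sub, map_pow, map_ofNat, hσσ] at h3
    have h4 : a ^ 2 = 2 - (2 - a ^ 4) ^ 2 := by rw [← h2]; linear_combination h3
    have h5 : a ^ 4 - 2 * a ^ 2 - 2 = 0 := by linear_combination a ^ 2 * h.root - h4
    have h6 : (3 : K) = 0 := by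
      linear_combination (3 + (a ^ 2 - 3) * (a ^ 2 + 2)) * h5 - (a ^ 2 - 3) * h.root
    norm_num at h6
  · have h3 := congrArg σ h2
    simp only [map_sub, map_pow, map_ofNat, hσσ] at h3
    have h4 : a ^ 2 = (a ^ 4 - a ^ 2 - 2) ^ 2 - (a ^ 4 - a ^ 2 - 2) - 2 := by
      rw [← h2]; linear_combination h3
    have h5 : a ^ 4 + a ^ 2 - 2 = 0 := by linear_combination (a ^ 2 - 2) * h.root + h4
    have h6 : (3 : K) = 0 := by linear_combination (a ^ 2 - 1) * h5 - h.root
    norm_num at h6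

end SqrtTriple

/-! ### The Galois group -/

theorem exists_gal_equiv_A4 {K : Type*} [Field K] [Algebra ℚ K] [CharZero K]
    [IsSplittingField ℚ K (X ^ 6 - 3 * X ^ 2 - 1 : ℚ[X])] [FiniteDimensional ℚ K] [IsGalois ℚ K] :
    Nonempty ((K ≃ₐ[ℚ] K) ≃* alternatingGroup (Fin 4)) := by
  obtain ⟨a, b, c, h⟩ := exists_sqrtTriple K
  obtain ⟨π, hπ⟩ := h.exists_perm
  have hinj : Function.Injective π := by
    rw [injective_iff_map_eq_one]
    intro σ hσ
    exact h.algEquiv_eq_one fun i => by rw [hπ, hσ]; rfl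
  have hirr : ∃ σ : K ≃ₐ[ℚ] K, σ (a ^ 2) ≠ a ^ 2 := by
    by_contra! hfix
    obtain ⟨r, hr⟩ := (IsGalois.mem_range_algebraMap_iff_fixed (F := ℚ) (a ^ 2)).2 hfix
    refine no_rat_root_cubic r ((algebraMap ℚ K).injective ?_)
    simp only [map_sub, map_mul, map_pow, map_ofNat, map_one, map_zero, hr]
    linear_combination h.root
  obtain ⟨σ, hσ⟩ := hirr
  have hσ2 : π σ * π σ ≠ 1 := fun hσσ =>
    hσ (h.map_sq_of_involution (hinj (by rw [map_mul, hσσ, map_one])))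
  -- The image contains a permutation moving the point fixed by the three-cycle `π σ`.
  obtain ⟨i, hi⟩ := A4.exists_fixed_of_threeCycle (π σ) hσ2
  have hmove : ∃ τ : K ≃ₐ[ℚ] K, τ (quarticRoot a b c i) ≠ quarticRoot a b c i := by
    by_contra! hfix
    obtain ⟨r, hr⟩ := (IsGalois.mem_range_algebraMap_iff_fixed (F := ℚ) _).2 hfix
    refine no_rat_root_quartic r ((algebraMap ℚ K).injective ?_)
    simp only [map_sub, map_add, map_mul, map_pow, map_ofNat, map_zero, hr]
    exact h.quarticRoot_eq i
  obtain ⟨τ, hτ⟩ := hmove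
  have hτσ : π τ ∉ ({1, π σ, π σ * π σ} : Finset (alternatingGroup (Fin 4))) := by
    intro hmem
    simp only [Finset.mem_insert, Finset.mem_singleton] at hmem
    rw [hπ] at hτ
    rcases hmem with hm | hm | hm <;> simp [hm, hi] at hτ
  have htop : π.range = ⊤ := A4.eq_top ⟨σ, rfl⟩ ⟨τ, rfl⟩ hσ2 hτσ
  exact ⟨MulEquiv.ofBijective π ⟨hinj, MonoidHom.range_eq_top.1 htop⟩⟩

theorem sextic_splitting_field_ten_intermediate_fields :
    Nat.card (IntermediateField ℚ (X ^ 6 - 3 * X ^ 2 - 1 : ℚ[X]).SplittingField) = 10 ∧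
    Nat.card (Subgroup ((X ^ 6 - 3 * X ^ 2 - 1 : ℚ[X]).SplittingField ≃ₐ[ℚ]
        (X ^ 6 - 3 * X ^ 2 - 1 : ℚ[X]).SplittingField)) = 10 ∧
    Nonempty (((X ^ 6 - 3 * X ^ 2 - 1 : ℚ[X]).SplittingField ≃ₐ[ℚ]
        (X ^ 6 - 3 * X ^ 2 - 1 : ℚ[X]).SplittingField) ≃* alternatingGroup (Fin 4)) := by
  -- The `ℚ`-algebra structure on the splitting field in the statement is found from characteristic
  -- zero; it is the one of the construction of splitting fields because there is only one.
  have hsplit : IsSplittingField ℚ (X ^ 6 - 3 * X ^ 2 - 1 : ℚ[X]).SplittingField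
      (X ^ 6 - 3 * X ^ 2 - 1 : ℚ[X]) := by
    convert IsSplittingField.splittingField (X ^ 6 - 3 * X ^ 2 - 1 : ℚ[X])
    exact Subsingleton.elim _ _
  have hnormal : Normal ℚ (X ^ 6 - 3 * X ^ 2 - 1 : ℚ[X]).SplittingField :=
    Normal.of_isSplittingField (X ^ 6 - 3 * X ^ 2 - 1 : ℚ[X])
  have hfin : FiniteDimensional ℚ (X ^ 6 - 3 * X ^ 2 - 1 : ℚ[X]).SplittingField :=
    IsSplittingField.finiteDimensional _ (X ^ 6 - 3 * X ^ 2 - 1 : ℚ[X])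
  have : IsGalois ℚ (X ^ 6 - 3 * X ^ 2 - 1 : ℚ[X]).SplittingField := ⟨⟩
  obtain ⟨e⟩ := exists_gal_equiv_A4 (K := (X ^ 6 - 3 * X ^ 2 - 1 : ℚ[X]).SplittingField)
  have hcard : Nat.card (Subgroup ((X ^ 6 - 3 * X ^ 2 - 1 : ℚ[X]).SplittingField ≃ₐ[ℚ]
      (X ^ 6 - 3 * X ^ 2 - 1 : ℚ[X]).SplittingField)) = 10 := by
    rw [Nat.card_congr e.mapSubgroup.toEquiv, A4.card_subgroup]
  refine ⟨?_, hcard, ⟨e⟩⟩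
  rw [Nat.card_congr (IsGalois.intermediateFieldEquivSubgroup.toEquiv.trans
    OrderDual.ofDual), hcard]
end
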